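/- For every (f,T) ∈ 𝓒^1 × 𝓔^1, the set K(f,T) is a nonempty compact subset of ℝ/ℤ and T(K(f,T)) = K(f,T). -/

import Mathlib

/-!
The circle map `T` contracts along inverse branches: every orbit segment of length `n` is shadowed,
exponentially closely backwards in time, by one with a prescribed endpoint, found by solving
`Fⁿ(a') = w` on the line, where the lift `F` is onto. For Lipschitz `f`, Birkhoff sums along the two
segments differ by at most a constant, independent of `n`, times the distance of the endpoints.

*Existence of calibrated functions.* The maximal Birkhoff sums `uₙ(x) = max {Sₙ f(y) | Tⁿ y = x}`
are therefore equi-Lipschitz, so `n ↦ uₙ(p)` is additive up to a bounded error and `uₙ - n b` is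
uniformly bounded for some `b`. Its limsup is Lipschitz and calibrated relative to `b`. Integrating
the sub-action inequality gives `∫ f dμ ≤ b` for invariant `μ`, with equality for an invariant
measure carried by the orbits that stay in the equality set; hence `b = β(f, T)`.

*Compactness and invariance.* Each `Λ_{f,T,g}` is the invariant core of a closed set, hence nonempty
and strictly invariant, and strict invariance passes to the union. All continuous calibrated
functions share one Lipschitz constant, so those vanishing at a base point form a compact set `Y`,
and `K(f, T)` is the projection to the circle of the invariant core of one closed subset of
`Y × ℝ/ℤ` under `id × T`.
-/

open MeasureTheory Topology Filter Set
open scoped UniformConvergence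

noncomputable section

/-- The circle `ℝ/ℤ`. -/
abbrev Circle1 : Type := AddCircle (1 : ℝ)

/-- The canonical representative in `[0,1)` of a point of `ℝ/ℤ`. -/
noncomputable def rep (z : Circle1) : ℝ := (AddCircle.equivIco 1 0 z : ℝ)

/-- The circle map induced by a lift `F : ℝ → ℝ`. -/
noncomputable def cmap (F : ℝ → ℝ) : Circle1 → Circle1 := fun z => ((F (rep z) : ℝ) : Circle1)

/-- The data determining the `C^r` topology: all derivatives of order `≤ r`, viewed in the
space of functions `ℝ → ℝ` with the uniform-convergence topology. -/
noncomputable def crSeq (r : ℕ∞) (f : ℝ → ℝ) : ℕ → (ℝ →ᵤ ℝ) :=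
  fun k => UniformFun.ofFun (if (k : ℕ∞) ≤ r then iteratedDeriv k f else 0)

/-- The space `𝓒^r` of `C^r` functions `ℝ/ℤ → ℝ`. -/
def CrFun (r : ℕ∞) : Type := {f : Circle1 → ℝ // ContDiff ℝ r fun x : ℝ => f ↑x}

/-- The `C^r` topology on `𝓒^r`. -/
noncomputable instance (r : ℕ∞) : TopologicalSpace (CrFun r) :=
  TopologicalSpace.induced (fun f : CrFun r => crSeq r fun x : ℝ => f.1 ↑x) inferInstance

/-- `F : ℝ → ℝ` is a lift of a `C^r` expanding circle map: it is `C^r`, sends `x+1` to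
`F x + d` for a fixed integer `d`, and `|(Fⁿ)'| ≥ C λⁿ` for some `C > 0`, `λ > 1`. -/
def ExpandingLift (r : ℕ∞) (F : ℝ → ℝ) : Prop :=
  ContDiff ℝ r F ∧ (∃ d : ℤ, ∀ x : ℝ, F (x + 1) = F x + d) ∧
    ∃ C > (0 : ℝ), ∃ l > (1 : ℝ), ∀ n : ℕ, 1 ≤ n → ∀ x : ℝ, C * l ^ n ≤ |deriv (F^[n]) x|

/-- The space `𝓔^r` of (lifts of) `C^r` expanding circle maps, with the `C^r` topology. -/
def ExpMap (r : ℕ∞) : Type := {F : ℝ → ℝ // ExpandingLift r F}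

noncomputable instance (r : ℕ∞) : TopologicalSpace (ExpMap r) :=
  TopologicalSpace.induced (fun F : ExpMap r => crSeq r F.1) inferInstance

/-- `μ` is a `T`-invariant Borel probability measure. -/
def InvProb (T : Circle1 → Circle1) (μ : Measure Circle1) : Prop :=
  IsProbabilityMeasure μ ∧ μ.map T = μ

/-- `β(f,T)`, the maximal ergodic average. -/
noncomputable def beta (f : Circle1 → ℝ) (T : Circle1 → Circle1) : ℝ :=
  sSup ((fun μ : Measure Circle1 => ∫ x, f x ∂μ) '' {μ | InvProb T μ})

/-- `μ` is a maximizing measure for `(f,T)`. -/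
def IsMaximizing (f : Circle1 → ℝ) (T : Circle1 → Circle1) (μ : Measure Circle1) : Prop :=
  InvProb T μ ∧ ∫ x, f x ∂μ = beta f T

/-- `μ` is a periodic measure: an invariant measure supported on a periodic orbit. -/
def IsPeriodicMeasure (T : Circle1 → Circle1) (μ : Measure Circle1) : Prop :=
  InvProb T μ ∧ ∃ x : Circle1, ∃ n : ℕ, 0 < n ∧ T^[n] x = x ∧
    μ (Set.range fun k : ℕ => T^[k] x) = 1

/-- `(f,T)` is uniquely maximized by a periodic measure. -/
def UniqMaxPeriodic (f : Circle1 → ℝ) (T : Circle1 → Circle1) : Prop :=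
  ∃ μ : Measure Circle1, IsMaximizing f T μ ∧ IsPeriodicMeasure T μ ∧
    ∀ ν : Measure Circle1, IsMaximizing f T ν → ν = μ

/-- A (continuous) sub-action for `(f,T)`. -/
def IsSubaction (f : Circle1 → ℝ) (T : Circle1 → Circle1) (g : Circle1 → ℝ) : Prop :=
  Continuous g ∧ ∀ x, g x + f x ≤ g (T x) + beta f T

/-- A calibrated sub-action for `(f,T)`. -/
def IsCalibrated (f : Circle1 → ℝ) (T : Circle1 → Circle1) (g : Circle1 → ℝ) : Prop :=
  IsSubaction f T g ∧ ∀ x, ∃ y, T y = x ∧ g y + f y = g x + beta f T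

/-- `G_{f,T}`: the set of Lipschitz calibrated sub-actions of `(f,T)`. -/
def Gset (f : Circle1 → ℝ) (T : Circle1 → Circle1) : Set (Circle1 → ℝ) :=
  {g | (∃ K : NNReal, LipschitzWith K g) ∧ IsCalibrated f T g}

/-- The set `E_{f,T,g}`. -/
def Eset (f : Circle1 → ℝ) (T : Circle1 → Circle1) (g : Circle1 → ℝ) : Set Circle1 :=
  {x | g x + f x = g (T x) + beta f T}

/-- The set `Λ*_{f,T,g}`. -/
def LambdaStar (f : Circle1 → ℝ) (T : Circle1 → Circle1) (g : Circle1 → ℝ) : Set Circle1 :=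
  {x | ∀ n : ℕ, T^[n] x ∈ Eset f T g}

/-- The set `Λ_{f,T,g}`. -/
def Lambda (f : Circle1 → ℝ) (T : Circle1 → Circle1) (g : Circle1 → ℝ) : Set Circle1 :=
  ⋂ n : ℕ, T^[n] '' LambdaStar f T g

/-- The set `K(f,T)`. -/
def Kset (f : Circle1 → ℝ) (T : Circle1 → Circle1) : Set Circle1 :=
  ⋃ g ∈ Gset f T, Lambda f T g

/-- The `(f,T)`-non-wandering set `Ω(f,T)`. -/
def OmegaSet (f : Circle1 → ℝ) (T : Circle1 → Circle1) : Set Circle1 :=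
  {x | ∀ ε > (0 : ℝ), ∃ n : ℕ, 1 ≤ n ∧ ∃ z : Circle1, T^[n] z = x ∧ dist z x < ε ∧
    |∑ i ∈ Finset.range n, (f (T^[i] z) - beta f T)| < ε}

/-- `A` is a periodic orbit of `T`. -/
def IsPeriodicOrbit (T : Circle1 → Circle1) (A : Set Circle1) : Prop :=
  ∃ x : Circle1, (∃ n : ℕ, 0 < n ∧ T^[n] x = x) ∧ A = Set.range fun k : ℕ => T^[k] x

/-- `A` is a `T`-minimal set: a nonempty compact invariant set with no proper nonempty
compact invariant subset. -/
def IsMinimalSet (T : Circle1 → Circle1) (A : Set Circle1) : Prop :=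
  A.Nonempty ∧ IsCompact A ∧ T '' A ⊆ A ∧
    ∀ B ⊆ A, B.Nonempty → IsCompact B → T '' B ⊆ B → B = A

/-- The space of `C^r` families of functions on the circle with `q` parameters,
i.e. maps `(t,x) ↦ f_t(x)` that are jointly `C^r` (the circle variable via a lift). -/
def FamFun (r : ℕ∞) (q : ℕ) : Type :=
  {G : ((Fin q → ℝ) × ℝ) → ℝ // ContDiff ℝ r G ∧ ∀ t x, G (t, x + 1) = G (t, x)}

noncomputable def famSeq (r : ℕ∞) (q : ℕ) (G : ((Fin q → ℝ) × ℝ) → ℝ) :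
    (k : ℕ) → (((Fin q → ℝ) × ℝ) →ᵤ (((Fin q → ℝ) × ℝ) [×k]→L[ℝ] ℝ)) :=
  fun k => UniformFun.ofFun (if (k : ℕ∞) ≤ r then iteratedFDeriv ℝ k G else 0)

/-- The `C^r` topology on the space of `C^r` families. -/
noncomputable instance (r : ℕ∞) (q : ℕ) : TopologicalSpace (FamFun r q) :=
  TopologicalSpace.induced (fun G : FamFun r q => famSeq r q G.1) inferInstance

/-- The member `f_t : ℝ/ℤ → ℝ` of a family, at the parameter `t`. -/
noncomputable def famMem {r : ℕ∞} {q : ℕ} (G : FamFun r q) (t : Fin q → ℝ) : Circle1 → ℝ :=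
  fun z => G.1 (t, rep z)

/-- The product `m_∞` over `ℕ` of Lebesgue measure on `[0,1]`, realised as the pushforward of
the Haar probability measure of the compact group `(ℝ/ℤ)^ℕ` under the coordinatewise choice of
representatives in `[0,1)`. -/
noncomputable def mInfty : Measure (ℕ → ℝ) :=
  Measure.map (fun (t : ℕ → Circle1) (n : ℕ) => rep (t n))
    (MeasureTheory.Measure.addHaarMeasure (⊤ : TopologicalSpace.PositiveCompacts (ℕ → Circle1)))

/-- `S` is an `N`-dimensionally shy subset of a normed real vector space `V`. -/
def NDimShy {V : Type*} [NormedAddCommGroup V] [NormedSpace ℝ V] (N : ℕ) (S : Set V) : Prop :=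
  ∃ φ : Fin N → V, ∀ f : V,
    volume {t : Fin N → ℝ | (∀ i, t i ∈ Set.Icc (0 : ℝ) 1) ∧ f + ∑ i, t i • φ i ∈ S} = 0

/-- `S` is a finite dimensionally shy subset of a normed real vector space `V`. -/
def FinDimShy {V : Type*} [NormedAddCommGroup V] [NormedSpace ℝ V] (S : Set V) : Prop :=
  ∃ N : ℕ, 0 < N ∧ NDimShy N S

/-- `S` is a shy subset of `V`: there are a compactly supported Borel probability measure `μ`
on `V` and a Borel set `S̃ ⊇ S` all of whose translates are `μ`-null. -/
def IsShy {V : Type*} [NormedAddCommGroup V] [NormedSpace ℝ V] (S : Set V) : Prop :=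
  letI : MeasurableSpace V := borel V
  ∃ μ : Measure V, μ Set.univ = 1 ∧ (∃ K : Set V, IsCompact K ∧ μ K = 1) ∧
    ∃ St : Set V, MeasurableSet St ∧ S ⊆ St ∧
      ∀ v : V, μ ((fun x => x + v) ⁻¹' St) = 0

/-- `S` is a prevalent subset of `V`. -/
def IsPrevalent {V : Type*} [NormedAddCommGroup V] [NormedSpace ℝ V] (S : Set V) : Prop :=
  IsShy Sᶜ

/-- `F` is the (normalized) lift of an orientation-preserving real analytic expanding circle
map of degree `d` fixing `π(0)`. -/
def AnalyticExpandingLift (F : ℝ → ℝ) (d : ℕ) : Prop :=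
  (∀ x : ℝ, AnalyticAt ℝ F x) ∧ (∀ x : ℝ, F (x + 1) = F x + d) ∧ StrictMono F ∧ F 0 = 0 ∧
    2 ≤ d ∧ ∃ C > (0 : ℝ), ∃ l > (1 : ℝ), ∀ n : ℕ, 1 ≤ n → ∀ x : ℝ, C * l ^ n ≤ |deriv (F^[n]) x|

/-- The inverse branches `τ_{i,n} = τ_{i_n} ∘ ⋯ ∘ τ_{i_1}`, where `τ = F⁻¹` and
`τ_i(x) = τ(x+i)`; the word `i` is indexed from `0`, so `i 0` is the first letter `i_1`. -/
noncomputable def tauIter (F : ℝ → ℝ) {d : ℕ} (i : ℕ → Fin d) : ℕ → ℝ → ℝ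
  | 0, x => x
  | n + 1, x => Function.invFun F (tauIter F i n x + ((i n : ℕ) : ℝ))

/-- The function `h^f_i` associated to an infinite word `i`. -/
noncomputable def hSum (F : ℝ → ℝ) {d : ℕ} (i : ℕ → Fin d) (f : Circle1 → ℝ) : ℝ → ℝ :=
  fun x => ∑' n : ℕ,
    (f ((tauIter F i (n + 1) x : ℝ) : Circle1) - f ((tauIter F i (n + 1) 0 : ℝ) : Circle1))

/-- The function `h^f_i` associated to a finite word of length `m` (the first `m` letters
of `i`). -/
noncomputable def hSumFin (F : ℝ → ℝ) {d : ℕ} (i : ℕ → Fin d) (m : ℕ) (f : Circle1 → ℝ) :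
    ℝ → ℝ :=
  fun x => ∑ n ∈ Finset.range m,
    (f ((tauIter F i (n + 1) x : ℝ) : Circle1) - f ((tauIter F i (n + 1) 0 : ℝ) : Circle1))

/-- `i ∈ CL(x,K)`: all backward images of `x` along the word `i` lie over `K`. -/
def WordIn (F : ℝ → ℝ) {d : ℕ} (i : ℕ → Fin d) (x : ℝ) (K : Set Circle1) : Prop :=
  ∀ n : ℕ, 1 ≤ n → ((tauIter F i n x : ℝ) : Circle1) ∈ K

/-- `x` (a real, lying over `K`) is an `f`-supercritical value of `K`. -/
def IsSupercriticalValue (F : ℝ → ℝ) (d : ℕ) (f : Circle1 → ℝ) (K : Set Circle1) (x : ℝ) :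
    Prop :=
  ((x : ℝ) : Circle1) ∈ K ∧ ∃ i j : ℕ → Fin d, WordIn F i x K ∧ WordIn F j x K ∧ i 0 ≠ j 0 ∧
    deriv (hSum F i f) x = deriv (hSum F j f) x

/-- `x` is a critical value of `T|K`. -/
def IsCriticalValue (T : Circle1 → Circle1) (K : Set Circle1) (x : Circle1) : Prop :=
  x ∈ K ∧ ∃ y z, y ∈ K ∧ z ∈ K ∧ y ≠ z ∧ T y = x ∧ T z = x

/-- A critical value `x` of `T|K` is regular: on each side of `x` there is a continuous
inverse branch of `T` selecting the unique preimage in `K`. -/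
def IsRegularCriticalValue (T : Circle1 → Circle1) (K : Set Circle1) (x : Circle1) : Prop :=
  ∃ U : Set Circle1, U ∈ 𝓝 x ∧ IsConnected U ∧
    ∀ b ∈ U \ {x}, ∃ s : Circle1 → Circle1,
      ContinuousOn s (connectedComponentIn (U \ {x}) b) ∧
      (∀ y ∈ connectedComponentIn (U \ {x}) b, T (s y) = y) ∧
      (∀ y ∈ K ∩ connectedComponentIn (U \ {x}) b, T ⁻¹' {y} ∩ K = {s y})

/-- `T|K` is Sturmian-like: every critical value is regular. -/
def SturmianLike (T : Circle1 → Circle1) (K : Set Circle1) : Prop :=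
  ∀ x, IsCriticalValue T K x → IsRegularCriticalValue T K x

/-- `f : ℝ/ℤ → ℝ` is a trigonometric polynomial. -/
def IsTrigPoly (f : Circle1 → ℝ) : Prop :=
  ∃ m : ℕ, ∃ a b : ℕ → ℝ, ∀ x : ℝ,
    f ↑x = a 0 + ∑ k ∈ Finset.range m,
      (a (k + 1) * Real.cos (2 * Real.pi * (k + 1) * x) +
        b (k + 1) * Real.sin (2 * Real.pi * (k + 1) * x))

end

open scoped NNReal

/-! ### Invariant cores -/

section InvariantCore

variable {X : Type*}

/-- The points whose entire forward orbit under `T` stays in `E`. -/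
def stayingSet (T : X → X) (E : Set X) : Set X :=
  {x | ∀ n : ℕ, T^[n] x ∈ E}

/-- The points that are, for every `n`, the `n`-th image of a point of `stayingSet T E`. If `E` is
closed in a compact Hausdorff space and `T` is continuous, this is the largest subset `A` of `E`
such that `T '' A = A`. -/
def invariantCore (T : X → X) (E : Set X) : Set X :=
  ⋂ n : ℕ, T^[n] '' stayingSet T E

lemma mapsTo_stayingSet (T : X → X) (E : Set X) :
    MapsTo T (stayingSet T E) (stayingSet T E) := fun _ hx n => hx (n + 1)

lemma invariantCore_subset_stayingSet (T : X → X) (E : Set X) :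
    invariantCore T E ⊆ stayingSet T E :=
  (iInter_subset _ 0).trans (image_id _).subset

lemma antitone_image_iterate {T : X → X} {S : Set X} (hS : MapsTo T S S) :
    Antitone fun n => T^[n] '' S :=
  antitone_nat_of_succ_le fun n => by
    rw [Function.iterate_succ, image_comp]
    exact image_mono hS.image_subset

lemma isClosed_stayingSet [TopologicalSpace X] {T : X → X} {E : Set X} (hT : Continuous T)
    (hE : IsClosed E) : IsClosed (stayingSet T E) := by
  simp only [stayingSet, ofPred_forall]
  exact isClosed_iInter fun n => hE.preimage (hT.iterate n)

lemma mem_invariantCore_prodMap {Y : Type*} {T : X → X} {E : Set (Y × X)} {y : Y} {x : X} :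
    (y, x) ∈ invariantCore (Prod.map id T) E ↔ x ∈ invariantCore T {x | (y, x) ∈ E} := by
  simp only [invariantCore, stayingSet, mem_iInter, Prod.map_iterate, Function.iterate_id]
  refine forall_congr' fun n => ⟨?_, ?_⟩
  · rintro ⟨⟨_, z⟩, hz, ⟨⟩⟩
    exact ⟨z, hz, rfl⟩
  · rintro ⟨z, hz, rfl⟩
    exact ⟨(y, z), hz, rfl⟩

lemma image_snd_invariantCore_prodMap {Y : Type*} (T : X → X) (E : Set (Y × X)) :
    Prod.snd '' invariantCore (Prod.map id T) E = ⋃ y, invariantCore T {x | (y, x) ∈ E} := by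
  ext x
  simp only [mem_image, Prod.exists, mem_invariantCore_prodMap, exists_eq_right,
    mem_iUnion]

variable [TopologicalSpace X] [CompactSpace X] {T : X → X} {E : Set X}

lemma isCompact_image_iterate_stayingSet (hT : Continuous T) (hE : IsClosed E) (n : ℕ) :
    IsCompact (T^[n] '' stayingSet T E) :=
  (isClosed_stayingSet hT hE).isCompact.image (hT.iterate n)

variable [T2Space X]

lemma isCompact_invariantCore (hT : Continuous T) (hE : IsClosed E) :
    IsCompact (invariantCore T E) :=
  (isClosed_iInter fun n => (isCompact_image_iterate_stayingSet hT hE n).isClosed).isCompact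

lemma image_invariantCore (hT : Continuous T) (hE : IsClosed E) :
    T '' invariantCore T E = invariantCore T E := by
  refine Subset.antisymm ?_ fun z hz => ?_
  · rintro _ ⟨x, hx, rfl⟩
    refine mem_iInter.2 fun n => ?_
    obtain ⟨y, hy, rfl⟩ := mem_iInter.1 hx n
    exact ⟨T y, mapsTo_stayingSet T E hy, (Function.Commute.self_iterate T n y).symm⟩
  · -- The preimages of `z` lying in `Tⁿ(stayingSet T E)` form a decreasing sequence of nonempty
    -- compact sets.
    have hcompact (n : ℕ) : IsCompact (T ⁻¹' {z} ∩ T^[n] '' stayingSet T E) :=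
      (isCompact_image_iterate_stayingSet hT hE n).inter_left (isClosed_singleton.preimage hT)
    have hnonempty (n : ℕ) : (T ⁻¹' {z} ∩ T^[n] '' stayingSet T E).Nonempty := by
      obtain ⟨y, hy, hyz⟩ := mem_iInter.1 hz (n + 1)
      exact ⟨T^[n] y, by rwa [Function.iterate_succ_apply'] at hyz, y, hy, rfl⟩
    obtain ⟨y, hy⟩ := IsCompact.nonempty_iInter_of_sequence_nonempty_isCompact_isClosed _
      (fun n => inter_subset_inter_right _ <|
        antitone_image_iterate (mapsTo_stayingSet T E) n.le_succ)
      hnonempty (hcompact 0) fun n => (hcompact n).isClosed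
    rw [← inter_iInter] at hy
    exact ⟨y, hy.2, hy.1⟩

lemma invariantCore_nonempty [Nonempty X] (hT : Continuous T) (hE : IsClosed E)
    (hfib : ∀ x, ∃ y ∈ E, T y = x) : (invariantCore T E).Nonempty := by
  choose σ hσE hσ using hfib
  let x (n : ℕ) : X := σ^[n] (Classical.arbitrary X)
  have iterate_x (k n : ℕ) : T^[k] (x (n + k)) = x n := by
    rw [← (show Function.LeftInverse T σ from hσ).iterate k (x n), ← Function.iterate_add_apply,
      add_comm n]
  -- `y m` is a limit of `x (n + m)` as `n → ∞`; one ultrafilter makes these limits compatible.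
  have hlim (m : ℕ) : ∃ y, Tendsto (fun n => x (n + m)) (hyperfilter ℕ) (𝓝 y) := by
    obtain ⟨y, -, hy⟩ := isCompact_univ.ultrafilter_le_nhds
      ((hyperfilter ℕ).map fun n => x (n + m)) (by simp)
    exact ⟨y, hy⟩
  choose y hy using hlim
  have iterate_y (m : ℕ) : T^[m] (y m) = y 0 :=
    tendsto_nhds_unique (((hT.iterate m).tendsto _).comp (hy m)) <|
      (hy 0).congr fun n => (iterate_x m n).symm
  have hyE (m : ℕ) : y m ∈ stayingSet T E := fun k => by
    refine hE.mem_of_tendsto (((hT.iterate k).tendsto _).comp (hy m)) ?_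
    filter_upwards [Nat.hyperfilter_le_atTop (eventually_gt_atTop k)] with n hn
    obtain ⟨j, hj⟩ : ∃ j, n + m = (j + 1) + k := ⟨n + m - (k + 1), by omega⟩
    rw [Function.comp_apply, hj, iterate_x]
    simp only [x, Function.iterate_succ_apply', hσE]
  exact ⟨y 0, mem_iInter.2 fun m => ⟨y m, hyE m, iterate_y m⟩⟩

end InvariantCore

/-! ### Calibrated functions -/

section Calibrated

variable {X : Type*} {T : X → X} {f : X → ℝ} {b : ℝ} {g : X → ℝ}

/-- `g` is a calibrated sub-action of `(f, T)` relative to the constant `b`. Neither continuity of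
`g` nor `b = β(f, T)` is required; the former implies the latter, see `beta_eq`. -/
structure IsCalibratedWith (T : X → X) (f : X → ℝ) (b : ℝ) (g : X → ℝ) : Prop where
  le : ∀ x, g x + f x ≤ g (T x) + b
  exists_eq : ∀ x, ∃ y, T y = x ∧ g y + f y = g x + b

/-- The equality locus of the sub-action inequality for the constant `b`; the paper's `E_{f,T,g}`
is the case `b = β(f, T)`. -/
def contactLocus (T : X → X) (f : X → ℝ) (b : ℝ) (g : X → ℝ) : Set X :=
  {x | g x + f x = g (T x) + b}

lemma isClosed_contactLocus [TopologicalSpace X] (hT : Continuous T) (hf : Continuous f)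
    (hg : Continuous g) : IsClosed (contactLocus T f b g) :=
  isClosed_eq (hg.add hf) ((hg.comp hT).add_const b)

lemma contactLocus_sub_const (T : X → X) (f : X → ℝ) (b : ℝ) (g : X → ℝ) (c : ℝ) :
    contactLocus T f b (fun x => g x - c) = contactLocus T f b g := by
  ext x
  simp only [contactLocus, mem_ofPred_eq]
  constructor <;> intro h <;> linarith

namespace IsCalibratedWith

lemma invariantCore_contactLocus_nonempty [TopologicalSpace X] [CompactSpace X] [T2Space X]
    [Nonempty X] (h : IsCalibratedWith T f b g) (hT : Continuous T) (hf : Continuous f)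
    (hg : Continuous g) : (invariantCore T (contactLocus T f b g)).Nonempty :=
  invariantCore_nonempty hT (isClosed_contactLocus hT hf hg) fun x => by
    obtain ⟨y, rfl, hy⟩ := h.exists_eq x
    exact ⟨y, hy, rfl⟩

lemma sub_const (h : IsCalibratedWith T f b g) (c : ℝ) :
    IsCalibratedWith T f b fun x => g x - c where
  le x := by linarith [h.le x]
  exists_eq x := by
    obtain ⟨y, hy, hyx⟩ := h.exists_eq x
    exact ⟨y, hy, by linarith⟩

lemma add_birkhoffSum_le (h : IsCalibratedWith T f b g) (n : ℕ) (x : X) :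
    g x + birkhoffSum T f n x ≤ g (T^[n] x) + n * b := by
  induction n with
  | zero => simp
  | succ n ih =>
    rw [birkhoffSum_succ, Function.iterate_succ_apply', Nat.cast_succ]
    linarith [h.le (T^[n] x)]

lemma exists_add_birkhoffSum_eq (h : IsCalibratedWith T f b g) (n : ℕ) (x : X) :
    ∃ y, T^[n] y = x ∧ g y + birkhoffSum T f n y = g x + n * b := by
  induction n generalizing x with
  | zero => exact ⟨x, rfl, by simp⟩
  | succ n ih =>
    obtain ⟨z, rfl, hz⟩ := h.exists_eq x
    obtain ⟨y, rfl, hy⟩ := ih z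
    refine ⟨y, Function.iterate_succ_apply' T n y, ?_⟩
    rw [birkhoffSum_succ, Nat.cast_succ]
    linarith

end IsCalibratedWith

end Calibrated

/-! ### Backward contraction -/

section BackwardContraction

variable {X : Type*} [PseudoMetricSpace X] {T : X → X} {f : X → ℝ} {K M θ : ℝ≥0}

/-- `T` contracts along inverse branches with constant `M` and rate `θ`: every orbit segment
`y, T y, …, Tⁿ y` is shadowed, exponentially closely backwards in time, by an orbit segment with
prescribed endpoint `x`. -/
def ContractsBackward (M θ : ℝ≥0) (T : X → X) : Prop :=
  ∀ (n : ℕ) (y x : X), ∃ z, T^[n] z = x ∧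
    ∀ i ≤ n, dist (T^[i] y) (T^[i] z) ≤ M * θ ^ (n - i) * dist (T^[n] y) x

lemma ContractsBackward.surjective (hT : ContractsBackward M θ T) : Function.Surjective T :=
  fun x => (hT 1 x x).imp fun _ hz => hz.1

lemma sum_range_pow_sub_le (hθ : θ < 1) (n : ℕ) :
    ∑ i ∈ Finset.range n, θ ^ (n - i) ≤ (1 - θ)⁻¹ := by
  have hsummable : Summable fun i => θ ^ i := NNReal.summable_geometric hθ
  calc ∑ i ∈ Finset.range n, θ ^ (n - i)
      ≤ ∑ i ∈ Finset.range n, θ ^ (n - 1 - i) :=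
        Finset.sum_le_sum fun i _ => pow_le_pow_of_le_one zero_le hθ.le (by omega)
    _ = ∑ i ∈ Finset.range n, θ ^ i := Finset.sum_range_reflect (fun i => θ ^ i) n
    _ ≤ ∑' i, θ ^ i := hsummable.sum_le_tsum _ fun _ _ => zero_le
    _ = (1 - θ)⁻¹ := NNReal.tsum_geometric hθ

lemma ContractsBackward.exists_birkhoffSum_le (hT : ContractsBackward M θ T) (hθ : θ < 1)
    (hf : LipschitzWith K f) (n : ℕ) (y x : X) :
    ∃ z, T^[n] z = x ∧ dist y z ≤ M * θ ^ n * dist (T^[n] y) x ∧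
      birkhoffSum T f n y ≤ birkhoffSum T f n z + ↑(K * M / (1 - θ)) * dist (T^[n] y) x := by
  obtain ⟨z, hz, hdist⟩ := hT n y x
  refine ⟨z, hz, by simpa using hdist 0 n.zero_le, ?_⟩
  set δ := dist (T^[n] y) x
  have hterm (i : ℕ) (hi : i ∈ Finset.range n) :
      f (T^[i] y) ≤ f (T^[i] z) + K * (M * θ ^ (n - i) * δ) := by
    linarith [hf.le_add_mul (T^[i] y) (T^[i] z),
      mul_le_mul_of_nonneg_left (hdist i (Finset.mem_range.1 hi).le) K.coe_nonneg]
  have hgeom : (∑ i ∈ Finset.range n, (θ : ℝ) ^ (n - i)) ≤ ↑((1 - θ)⁻¹) := by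
    exact_mod_cast sum_range_pow_sub_le hθ n
  calc birkhoffSum T f n y
      ≤ ∑ i ∈ Finset.range n, (f (T^[i] z) + K * (M * θ ^ (n - i) * δ)) :=
        Finset.sum_le_sum hterm
    _ = birkhoffSum T f n z + K * M * δ * ∑ i ∈ Finset.range n, (θ : ℝ) ^ (n - i) := by
        rw [Finset.sum_add_distrib, Finset.mul_sum, birkhoffSum]
        congr 1
        exact Finset.sum_congr rfl fun i _ => by ring
    _ ≤ birkhoffSum T f n z + K * M * δ * ↑((1 - θ)⁻¹) := by gcongr
    _ = birkhoffSum T f n z + ↑(K * M / (1 - θ)) * δ := by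
        rw [div_eq_mul_inv]; push_cast; ring

lemma IsCalibratedWith.lipschitzWith {b : ℝ} {g : X → ℝ} (h : IsCalibratedWith T f b g)
    (hg : UniformContinuous g) (hT : ContractsBackward M θ T) (hθ : θ < 1)
    (hf : LipschitzWith K f) : LipschitzWith (K * M / (1 - θ)) g := by
  refine LipschitzWith.of_le_add_mul _ fun x x' => le_of_forall_pos_le_add fun ε hε => ?_
  obtain ⟨δ, hδ, hgδ⟩ := Metric.uniformContinuous_iff.1 hg ε hε
  have hpow : Tendsto (fun n : ℕ => (M : ℝ) * θ ^ n * dist x x') atTop (𝓝 0) := by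
    simpa using ((tendsto_pow_atTop_nhds_zero_of_lt_one θ.coe_nonneg
      (by exact_mod_cast hθ)).const_mul (M : ℝ)).mul_const (dist x x')
  obtain ⟨n, hn⟩ := (hpow.eventually_lt_const hδ).exists
  obtain ⟨y, rfl, hy⟩ := h.exists_add_birkhoffSum_eq n x
  obtain ⟨z, rfl, hyz, hsum⟩ := hT.exists_birkhoffSum_le hθ hf n y x'
  have hgyz : g y - g z < ε := (le_abs_self _).trans_lt (hgδ (hyz.trans_lt hn))
  linarith [h.add_birkhoffSum_le n z]

end BackwardContraction

/-! ### Quasi-additive sequences -/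

section QuasiAdditive

variable {a : ℕ → ℝ} {D : ℝ}

lemma abs_sub_mul_le_of_quasiAdditive (ha : ∀ m n, |a (m + n) - a m - a n| ≤ D) (m n : ℕ) :
    |a (m * n) - m * a n| ≤ (m + 1) * D := by
  induction m with
  | zero => simpa using ha 0 0
  | succ m ih =>
    rw [Nat.succ_mul, Nat.cast_succ]
    calc |a (m * n + n) - (m + 1) * a n|
        = |(a (m * n + n) - a (m * n) - a n) + (a (m * n) - m * a n)| := by ring_nf
      _ ≤ D + (m + 1) * D := (abs_add_le _ _).trans (add_le_add (ha _ _) ih)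
      _ = (m + 1 + 1) * D := by ring

lemma abs_sub_mul_div_le_of_quasiAdditive (ha : ∀ m n, |a (m + n) - a m - a n| ≤ D) {m : ℕ}
    (hm : 0 < m) (n : ℕ) : |a n - n * (a m / m)| ≤ D * (1 + (n + 2) / m) := by
  have hm' : (0 : ℝ) < m := Nat.cast_pos.2 hm
  have hmn := abs_sub_mul_le_of_quasiAdditive ha m n
  have hnm := abs_sub_mul_le_of_quasiAdditive ha n m
  rw [mul_comm n m, abs_sub_comm] at hnm
  rw [abs_sub_comm] at hmn
  calc |a n - n * (a m / m)|
      = |(m * a n - a (m * n)) - (n * a m - a (m * n))| / m := by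
        rw [← abs_of_pos hm', ← abs_div, abs_of_pos hm']
        congr 1
        field_simp
        ring
    _ ≤ ((m + 1) * D + (n + 1) * D) / m := by
        gcongr
        exact (abs_sub _ _).trans (add_le_add hmn hnm)
    _ = D * (1 + (n + 2) / m) := by
        field_simp
        ring

lemma exists_abs_sub_mul_le_of_quasiAdditive (ha : ∀ m n, |a (m + n) - a m - a n| ≤ D) :
    ∃ b : ℝ, ∀ n : ℕ, |a n - n * b| ≤ D := by
  have hslope (m n : ℕ) := abs_sub_mul_div_le_of_quasiAdditive ha m.succ_pos n
  have hbdd (m : ℕ) : a (m + 1) / ↑(m + 1) ∈ Metric.closedBall (a 1) (D * (1 + (1 + 2))) := by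
    have hD : 0 ≤ D := (abs_nonneg _).trans (ha 0 0)
    rw [Metric.mem_closedBall, dist_comm, Real.dist_eq]
    refine le_trans (by simpa using hslope m 1) ?_
    gcongr
    exact div_le_self (by norm_num) (by simp)
  obtain ⟨b, -, φ, hφ, hb⟩ := tendsto_subseq_of_bounded Metric.isBounded_closedBall hbdd
  refine ⟨b, fun n => le_of_tendsto_of_tendsto' ((hb.const_mul _).const_sub _).abs ?_
    fun k => hslope (φ k) n⟩
  have hdiv : Tendsto (fun k => ((n : ℝ) + 2) / ↑(φ k + 1)) atTop (𝓝 0) :=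
    ((tendsto_natCast_atTop_atTop.comp (tendsto_add_atTop_nat 1)).comp hφ.tendsto_atTop
      ).const_div_atTop _
  simpa using (hdiv.const_add 1).const_mul D

end QuasiAdditive

/-! ### Existence of calibrated functions -/

section Limsup

variable {u v : ℕ → ℝ} {B : ℝ}

lemma isBoundedUnder_le_of_abs_le (hu : ∀ n, |u n| ≤ B) : IsBoundedUnder (· ≤ ·) atTop u :=
  isBoundedUnder_of ⟨B, fun n => (abs_le.1 (hu n)).2⟩

lemma isCoboundedUnder_le_of_abs_le (hu : ∀ n, |u n| ≤ B) : IsCoboundedUnder (· ≤ ·) atTop u :=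
  (isBoundedUnder_of ⟨-B, fun n => (abs_le.1 (hu n)).1⟩ :
    IsBoundedUnder (· ≥ ·) atTop u).isCoboundedUnder_le

lemma limsup_le_limsup_add_const (hu : ∀ n, |u n| ≤ B) (hv : ∀ n, |v n| ≤ B) {c : ℝ}
    (huv : ∀ n, u n ≤ v n + c) : limsup u atTop ≤ limsup v atTop + c := by
  rw [← limsup_add_const atTop v c (isBoundedUnder_le_of_abs_le hv)
    (isCoboundedUnder_le_of_abs_le hv)]
  exact limsup_le_limsup (Eventually.of_forall huv) (isCoboundedUnder_le_of_abs_le hu)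
    (isBoundedUnder_of ⟨B + c, fun n => add_le_add_left (abs_le.1 (hv n)).2 c⟩)

variable {X : Type*} [PseudoMetricSpace X] {T : X → X} {f : X → ℝ} {b : ℝ}
  {w : ℕ → X → ℝ} {L : ℝ≥0}

lemma lipschitzWith_limsup (hw : ∀ n x, |w n x| ≤ B) (hlip : ∀ n, LipschitzWith L (w n)) :
    LipschitzWith L fun x => limsup (w · x) atTop :=
  LipschitzWith.of_le_add_mul _ fun x y =>
    limsup_le_limsup_add_const (hw · x) (hw · y) fun n => (hlip n).le_add_mul x y

lemma isCalibratedWith_limsup [CompactSpace X] [T1Space X] (hT : Continuous T) (hf : Continuous f)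
    (hw : ∀ n x, |w n x| ≤ B) (hlip : ∀ n, LipschitzWith L (w n))
    (hle : ∀ n x, w n x + f x ≤ w (n + 1) (T x) + b)
    (heq : ∀ n x, ∃ y, T y = x ∧ w n y + f y = w (n + 1) x + b) :
    IsCalibratedWith T f b fun x => limsup (w · x) atTop := by
  have limsup_succ (x : X) : limsup (fun n => w (n + 1) x) atTop = limsup (w · x) atTop :=
    limsup_nat_add (w · x) 1
  have le (x : X) : limsup (w · x) atTop + f x ≤ limsup (w · (T x)) atTop + b := by
    have hstep := limsup_le_limsup_add_const (hw · x) (fun n => hw (n + 1) (T x)) (c := b - f x)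
      fun n => by linarith [hle n x]
    rw [limsup_succ] at hstep
    linarith
  refine ⟨le, fun x => ?_⟩
  -- Along an ultrafilter realising the limsup at `x`, the calibrating preimages of `x` converge.
  obtain ⟨U, hU, hUx⟩ := mapClusterPt_iff_ultrafilter.1 (isGreatest_mapClusterPt_limsup
    (isCoboundedUnder_le_of_abs_le fun n => hw (n + 1) x)
    (isBoundedUnder_le_of_abs_le fun n => hw (n + 1) x)).1
  rw [limsup_succ] at hUx
  choose y hyT hyw using fun n => heq n x
  obtain ⟨z, -, hz : Tendsto y U (𝓝 z)⟩ := isCompact_univ.ultrafilter_le_nhds (U.map y) (by simp)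
  have hTz : T z = x :=
    (isClosed_singleton.preimage hT).mem_of_tendsto hz (Eventually.of_forall hyT)
  have hdist : Tendsto (fun n => w n z - w n (y n)) U (𝓝 0) := by
    refine squeeze_zero_norm (fun n => ?_)
      (by simpa using ((tendsto_const_nhds (x := z)).dist hz).const_mul (L : ℝ))
    exact (hlip n).dist_le_mul z (y n)
  have hwz : Tendsto (w · z) U (𝓝 (limsup (w · x) atTop + b - f z)) := by
    have hsum := hdist.add ((hUx.add_const b).sub ((hf.tendsto z).comp hz))
    rw [zero_add] at hsum
    refine hsum.congr fun n => ?_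
    rw [Function.comp_apply, ← hyw n]
    ring
  have hge := (mapClusterPt_iff_ultrafilter.2 ⟨U, hU, hwz⟩).le_limsup
    (isBoundedUnder_le_of_abs_le (hw · z))
  have hlez := le z
  rw [hTz] at hlez
  exact ⟨z, hTz, by linarith⟩

end Limsup

section MaxBirkhoffSum

variable {X : Type*}

/-- The maximal Birkhoff sum `max {Sₙ f(y) | Tⁿ y = x}`, that is, the `n`-th iterate of the
Lax–Oleinik operator applied to `0`. The supremum is attained, see
`exists_birkhoffSum_eq_maxBirkhoffSum`. -/
noncomputable def maxBirkhoffSum (T : X → X) (f : X → ℝ) (n : ℕ) (x : X) : ℝ :=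
  sSup (birkhoffSum T f n '' (T^[n] ⁻¹' {x}))

lemma continuous_birkhoffSum [TopologicalSpace X] {T : X → X} {f : X → ℝ} (hT : Continuous T)
    (hf : Continuous f) (n : ℕ) : Continuous (birkhoffSum T f n) :=
  continuous_finsetSum _ fun i _ => hf.comp (hT.iterate i)

section Compact

variable [TopologicalSpace X] [CompactSpace X] [T1Space X] {T : X → X} {f : X → ℝ}

lemma isCompact_image_birkhoffSum_fiber (hT : Continuous T) (hf : Continuous f) (n : ℕ) (x : X) :
    IsCompact (birkhoffSum T f n '' (T^[n] ⁻¹' {x})) :=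
  (isClosed_singleton.preimage (hT.iterate n)).isCompact.image (continuous_birkhoffSum hT hf n)

lemma birkhoffSum_le_maxBirkhoffSum (hT : Continuous T) (hf : Continuous f) (n : ℕ) (y : X) :
    birkhoffSum T f n y ≤ maxBirkhoffSum T f n (T^[n] y) :=
  le_csSup (isCompact_image_birkhoffSum_fiber hT hf n _).bddAbove ⟨y, rfl, rfl⟩

lemma exists_birkhoffSum_eq_maxBirkhoffSum (hT : Continuous T) (hsurj : Function.Surjective T)
    (hf : Continuous f) (n : ℕ) (x : X) :
    ∃ y, T^[n] y = x ∧ birkhoffSum T f n y = maxBirkhoffSum T f n x :=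
  (isCompact_image_birkhoffSum_fiber hT hf n x).sSup_mem (Nonempty.image _ (hsurj.iterate n x))

lemma maxBirkhoffSum_add_birkhoffSum_le (hT : Continuous T) (hsurj : Function.Surjective T)
    (hf : Continuous f) (m n : ℕ) (y : X) :
    maxBirkhoffSum T f m y + birkhoffSum T f n y ≤ maxBirkhoffSum T f (m + n) (T^[n] y) := by
  obtain ⟨z, rfl, hz⟩ := exists_birkhoffSum_eq_maxBirkhoffSum hT hsurj hf m y
  rw [← hz, ← birkhoffSum_add, ← Function.iterate_add_apply, add_comm n]
  exact birkhoffSum_le_maxBirkhoffSum hT hf (m + n) z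

lemma exists_maxBirkhoffSum_add_birkhoffSum_eq (hT : Continuous T)
    (hsurj : Function.Surjective T) (hf : Continuous f) (m n : ℕ) (x : X) :
    ∃ y, T^[n] y = x ∧
      maxBirkhoffSum T f m y + birkhoffSum T f n y = maxBirkhoffSum T f (m + n) x := by
  obtain ⟨z, rfl, hz⟩ := exists_birkhoffSum_eq_maxBirkhoffSum hT hsurj hf (m + n) x
  have hiter : T^[n] (T^[m] z) = T^[m + n] z := by rw [add_comm, Function.iterate_add_apply]
  refine ⟨T^[m] z, hiter, le_antisymm ?_ ?_⟩
  · exact hiter ▸ maxBirkhoffSum_add_birkhoffSum_le hT hsurj hf m n (T^[m] z)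
  · rw [← hz, birkhoffSum_add]
    gcongr
    exact birkhoffSum_le_maxBirkhoffSum hT hf m z

end Compact

variable [MetricSpace X] [CompactSpace X] {T : X → X} {f : X → ℝ} {K M θ : ℝ≥0}

lemma lipschitzWith_maxBirkhoffSum (hT : Continuous T) (hcontr : ContractsBackward M θ T)
    (hθ : θ < 1) (hf : LipschitzWith K f) (n : ℕ) :
    LipschitzWith (K * M / (1 - θ)) (maxBirkhoffSum T f n) := by
  refine LipschitzWith.of_le_add_mul _ fun x x' => ?_
  obtain ⟨y, rfl, hy⟩ :=
    exists_birkhoffSum_eq_maxBirkhoffSum hT hcontr.surjective hf.continuous n x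
  obtain ⟨z, rfl, -, hsum⟩ := hcontr.exists_birkhoffSum_le hθ hf n y x'
  rw [← hy]
  exact hsum.trans (add_le_add_left (birkhoffSum_le_maxBirkhoffSum hT hf.continuous n z) _)

lemma exists_abs_maxBirkhoffSum_sub_mul_le [Nonempty X] (hT : Continuous T)
    (hcontr : ContractsBackward M θ T) (hθ : θ < 1) (hf : LipschitzWith K f) :
    ∃ b B : ℝ, ∀ n x, |maxBirkhoffSum T f n x - n * b| ≤ B := by
  let p : X := Classical.arbitrary X
  set u := maxBirkhoffSum T f
  set D := ↑(K * M / (1 - θ)) * Metric.diam (univ : Set X)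
  have hosc (n : ℕ) (x y : X) : |u n x - u n y| ≤ D := by
    refine ((lipschitzWith_maxBirkhoffSum hT hcontr hθ hf n).dist_le_mul x y).trans ?_
    exact mul_le_mul_of_nonneg_left
      (Metric.dist_le_diam_of_mem isCompact_univ.isBounded (mem_univ x) (mem_univ y))
      NNReal.zero_le_coe
  have hquasi (m n : ℕ) : |u (m + n) p - u m p - u n p| ≤ D := by
    obtain ⟨y, hy, hyu⟩ := exists_maxBirkhoffSum_add_birkhoffSum_eq hT hcontr.surjective
      hf.continuous m n p
    obtain ⟨z, hz, hzu⟩ := exists_birkhoffSum_eq_maxBirkhoffSum hT hcontr.surjective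
      hf.continuous n p
    have hyn := birkhoffSum_le_maxBirkhoffSum hT hf.continuous n y
    have hzmn := maxBirkhoffSum_add_birkhoffSum_le hT hcontr.surjective hf.continuous m n z
    rw [hy] at hyn
    rw [hz] at hzmn
    exact abs_le.2 ⟨by linarith [(abs_le.1 (hosc m p z)).2],
      by linarith [(abs_le.1 (hosc m y p)).2]⟩
  obtain ⟨b, hb⟩ := exists_abs_sub_mul_le_of_quasiAdditive (a := (u · p)) hquasi
  refine ⟨b, D + D, fun n x => ?_⟩
  calc |u n x - n * b| = |(u n x - u n p) + (u n p - n * b)| := by ring_nf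
    _ ≤ D + D := (abs_add_le _ _).trans (add_le_add (hosc n x p) (hb n))

theorem exists_isCalibratedWith [Nonempty X] (hT : Continuous T)
    (hcontr : ContractsBackward M θ T) (hθ : θ < 1) (hf : LipschitzWith K f) :
    ∃ b g, LipschitzWith (K * M / (1 - θ)) g ∧ IsCalibratedWith T f b g := by
  obtain ⟨b, B, hB⟩ := exists_abs_maxBirkhoffSum_sub_mul_le hT hcontr hθ hf
  have hlip (n : ℕ) :
      LipschitzWith (K * M / (1 - θ)) fun x => maxBirkhoffSum T f n x - n * b :=
    LipschitzWith.of_le_add_mul _ fun x y => by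
      linarith [(lipschitzWith_maxBirkhoffSum hT hcontr hθ hf n).le_add_mul x y]
  refine ⟨b, _, lipschitzWith_limsup hB hlip,
    isCalibratedWith_limsup hT hf.continuous hB hlip (fun n x => ?_) fun n x => ?_⟩
  · have hstep := maxBirkhoffSum_add_birkhoffSum_le hT hcontr.surjective hf.continuous n 1 x
    simp only [birkhoffSum_one, Function.iterate_one] at hstep
    push_cast
    linarith
  · obtain ⟨y, hy, hyx⟩ := exists_maxBirkhoffSum_add_birkhoffSum_eq hT hcontr.surjective
      hf.continuous n 1 x
    rw [birkhoffSum_one] at hyx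
    refine ⟨y, hy, ?_⟩
    push_cast
    linarith

end MaxBirkhoffSum

/-! ### Invariant measures -/

section InvariantMeasure

variable {X : Type*} [MeasurableSpace X] {T : X → X}

lemma integral_add_sub_comp {μ : Measure X} (hT : MeasurePreserving T μ μ) {f g : X → ℝ}
    (hf : Integrable f μ) (hg : Integrable g μ) :
    ∫ x, (f x + g x - g (T x)) ∂μ = ∫ x, f x ∂μ := by
  have hgT : ∫ x, g (T x) ∂μ = ∫ x, g x ∂μ := by
    conv_rhs => rw [← hT.map_eq, integral_map hT.aemeasurable (hT.map_eq.symm ▸ hg.1)]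
  rw [integral_sub (f := fun x => f x + g x) (g := fun x => g (T x)) (hf.add hg)
    (hT.integrable_comp_of_integrable hg), integral_add hf hg, hgT, add_sub_cancel_right]

/-- The empirical measure of the orbit segment `x, T x, …, Tⁿ x`; it has `n + 1` atoms, so that it
is a probability measure for every `n`. -/
noncomputable def empiricalMeasure (T : X → X) (x : X) (n : ℕ) : Measure X :=
  ((n + 1 : ℕ) : ENNReal)⁻¹ • ∑ i ∈ Finset.range (n + 1), Measure.dirac (T^[i] x)

instance (T : X → X) (x : X) (n : ℕ) : IsProbabilityMeasure (empiricalMeasure T x n) where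
  measure_univ := by
    simp only [empiricalMeasure, Measure.smul_apply, Measure.coe_finsetSum, Finset.sum_apply,
      measure_univ, smul_eq_mul, Finset.sum_const, Finset.card_range, nsmul_eq_mul, mul_one]
    exact ENNReal.inv_mul_cancel (by simp) (ENNReal.natCast_ne_top _)

lemma integral_empiricalMeasure {φ : X → ℝ} (hφ : StronglyMeasurable φ) (x : X) (n : ℕ) :
    ∫ z, φ z ∂(empiricalMeasure T x n) = birkhoffAverage ℝ T φ (n + 1) x := by
  rw [empiricalMeasure, integral_smul_measure, integral_finsetSum_measure fun i _ =>
    integrable_dirac' hφ enorm_lt_top]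
  simp only [integral_dirac' _ _ hφ, ENNReal.toReal_inv, ENNReal.toReal_natCast, birkhoffAverage,
    birkhoffSum]

theorem exists_measurePreserving_of_compactSpace [TopologicalSpace X] [CompactSpace X] [T2Space X]
    [HasOuterApproxClosed X] [BorelSpace X] [Nonempty X] (hT : Continuous T) :
    ∃ μ : Measure X, IsProbabilityMeasure μ ∧ MeasurePreserving T μ μ := by
  let x : X := Classical.arbitrary X
  let P (n : ℕ) : ProbabilityMeasure X := ⟨empiricalMeasure T x n, inferInstance⟩
  obtain ⟨μ, -, hμ : Tendsto P (hyperfilter ℕ) (𝓝 μ)⟩ :=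
    isCompact_univ.ultrafilter_le_nhds ((hyperfilter ℕ).map P) (by simp)
  have hint (φ : BoundedContinuousFunction X ℝ) :
      Tendsto (fun n => birkhoffAverage ℝ T φ (n + 1) x) (hyperfilter ℕ) (𝓝 (∫ z, φ z ∂μ)) :=
    (ProbabilityMeasure.tendsto_iff_forall_integral_tendsto.1 hμ φ).congr fun n =>
      integral_empiricalMeasure φ.continuous.stronglyMeasurable x n
  have hshift (φ : BoundedContinuousFunction X ℝ) (n : ℕ) :
      birkhoffAverage ℝ T (φ ∘ T) n x = birkhoffAverage ℝ T φ n (T x) := by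
    simp only [birkhoffAverage, birkhoffSum, Function.comp_apply, ← Function.iterate_succ_apply,
      Function.iterate_succ_apply']
  refine ⟨μ, inferInstance, hT.measurable, ?_⟩
  have : IsProbabilityMeasure ((μ : Measure X).map T) :=
    Measure.isProbabilityMeasure_map hT.aemeasurable
  refine ext_of_forall_integral_eq_of_IsFiniteMeasure fun φ => ?_
  rw [integral_map hT.aemeasurable φ.continuous.aestronglyMeasurable, ← sub_eq_zero]
  have hdiff := (tendsto_birkhoffAverage_apply_sub_birkhoffAverage' ℝ φ.isBounded_range T x).comp
    (tendsto_add_atTop_nat 1)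
  refine tendsto_nhds_unique ?_ (hdiff.mono_left Nat.hyperfilter_le_atTop)
  refine ((hint (φ.compContinuous ⟨T, hT⟩)).sub (hint φ)).congr fun n => ?_
  exact congrArg (· - _) (hshift φ (n + 1))

theorem exists_measurePreserving_of_isCompact {X : Type*} [MetricSpace X] [MeasurableSpace X]
    [BorelSpace X] {T : X → X} {S : Set X} (hT : Continuous T) (hS : IsCompact S)
    (hne : S.Nonempty) (hmaps : MapsTo T S S) :
    ∃ μ : Measure X, IsProbabilityMeasure μ ∧ MeasurePreserving T μ μ ∧ ∀ᵐ x ∂μ, x ∈ S := by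
  have : CompactSpace S := isCompact_iff_compactSpace.1 hS
  have : Nonempty S := hne.to_subtype
  obtain ⟨ν, _, hν⟩ := exists_measurePreserving_of_compactSpace (hT.restrict hmaps)
  have hval : MeasurePreserving Subtype.val ν (ν.map Subtype.val) :=
    measurable_subtype_coe.measurePreserving ν
  refine ⟨ν.map Subtype.val, Measure.isProbabilityMeasure_map hval.aemeasurable,
    hval.of_semiconj hν (fun _ => rfl) hT.measurable, ?_⟩
  exact (ae_map_iff hval.aemeasurable hS.measurableSet).2 (Eventually.of_forall Subtype.property)

end InvariantMeasure

section MaximalAverage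

variable {X : Type*} [MeasurableSpace X] {T : X → X} {f g : X → ℝ} {b : ℝ}

lemma IsCalibratedWith.integral_le [TopologicalSpace X] [CompactSpace X] [OpensMeasurableSpace X]
    (h : IsCalibratedWith T f b g) (hf : Continuous f) (hg : Continuous g) {μ : Measure X}
    [IsProbabilityMeasure μ] (hμ : MeasurePreserving T μ μ) : ∫ x, f x ∂μ ≤ b := by
  have hfi : Integrable f μ := hf.integrable_of_hasCompactSupport (.of_compactSpace f)
  have hgi : Integrable g μ := hg.integrable_of_hasCompactSupport (.of_compactSpace g)
  calc ∫ x, f x ∂μ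
      = ∫ x, (f x + g x - g (T x)) ∂μ := (integral_add_sub_comp hμ hfi hgi).symm
    _ ≤ ∫ _, b ∂μ := integral_mono ((hfi.add hgi).sub (hμ.integrable_comp_of_integrable hgi))
        (integrable_const b) fun x => by linarith [h.le x]
    _ = b := by simp

lemma IsCalibratedWith.exists_integral_eq [MetricSpace X] [CompactSpace X] [BorelSpace X]
    [Nonempty X] (h : IsCalibratedWith T f b g) (hT : Continuous T) (hf : Continuous f)
    (hg : Continuous g) :
    ∃ μ : Measure X, IsProbabilityMeasure μ ∧ MeasurePreserving T μ μ ∧ ∫ x, f x ∂μ = b := by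
  set E := contactLocus T f b g
  have hne : (stayingSet T E).Nonempty :=
    (h.invariantCore_contactLocus_nonempty hT hf hg).mono (invariantCore_subset_stayingSet T E)
  have hclosed : IsClosed (stayingSet T E) :=
    isClosed_stayingSet hT (isClosed_contactLocus hT hf hg)
  obtain ⟨μ, _, hμ, hμE⟩ := exists_measurePreserving_of_isCompact hT hclosed.isCompact hne
    (mapsTo_stayingSet T E)
  have hfi : Integrable f μ := hf.integrable_of_hasCompactSupport (.of_compactSpace f)
  have hgi : Integrable g μ := hg.integrable_of_hasCompactSupport (.of_compactSpace g)
  refine ⟨μ, inferInstance, hμ, ?_⟩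
  calc ∫ x, f x ∂μ
      = ∫ x, (f x + g x - g (T x)) ∂μ := (integral_add_sub_comp hμ hfi hgi).symm
    _ = ∫ _, b ∂μ := integral_congr_ae <| hμE.mono fun x hx => by
        have hxE : g x + f x = g (T x) + b := hx 0
        linarith
    _ = b := by simp

end MaximalAverage

/-! ### Compact families of calibrated functions -/

section NormalizedCalibrated

open scoped BoundedContinuousFunction

section Topological

variable {X : Type*} [TopologicalSpace X] [CompactSpace X] [T2Space X] {T : X → X} {f : X → ℝ}
  {b : ℝ}

lemma isClosed_setOf_isCalibratedWith (hT : Continuous T) (hf : Continuous f) :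
    IsClosed {g : X →ᵇ ℝ | IsCalibratedWith T f b g} := by
  have heval (x : X) : Continuous fun g : X →ᵇ ℝ => g x := continuous_eval_const x
  have hle (x : X) : IsClosed {g : X →ᵇ ℝ | g x + f x ≤ g (T x) + b} :=
    isClosed_le ((heval x).add_const _) ((heval (T x)).add_const _)
  have hrel (x : X) :
      IsClosed {q : (X →ᵇ ℝ) × X | T q.2 = x ∧ q.1 q.2 + f q.2 = q.1 x + b} :=
    (isClosed_eq (hT.comp continuous_snd) continuous_const).inter
      (isClosed_eq (continuous_eval.add (hf.comp continuous_snd))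
        (((heval x).comp continuous_fst).add_const _))
  convert (isClosed_iInter hle).inter
    (isClosed_iInter fun x => isClosedMap_fst_of_compactSpace _ (hrel x)) using 1
  ext g
  simp only [mem_ofPred_eq, mem_inter_iff, mem_iInter, mem_image, Prod.exists, exists_and_right,
    exists_eq_right]
  exact ⟨fun h => ⟨h.le, h.exists_eq⟩, fun h => ⟨h.1, h.2⟩⟩

lemma isCompact_biUnion_invariantCore_contactLocus (hT : Continuous T) (hf : Continuous f)
    {Y : Set (X →ᵇ ℝ)} (hY : IsCompact Y) :
    IsCompact (⋃ g ∈ Y, invariantCore T (contactLocus T f b g)) := by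
  have : CompactSpace Y := isCompact_iff_compactSpace.1 hY
  have hE : IsClosed {q : Y × X | q.2 ∈ contactLocus T f b q.1} := by
    have hfst : Continuous fun q : Y × X => (q.1 : X →ᵇ ℝ) := by fun_prop
    exact isClosed_eq ((hfst.eval continuous_snd).add (hf.comp continuous_snd))
      ((hfst.eval (hT.comp continuous_snd)).add_const b)
  rw [biUnion_eq_iUnion]
  convert (isCompact_invariantCore (continuous_id.prodMap hT) hE).image continuous_snd using 1
  exact (image_snd_invariantCore_prodMap T {q : Y × X | q.2 ∈ contactLocus T f b q.1}).symm

end Topological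

/-- The continuous calibrated functions of `(f, T)` relative to `b` that vanish at `p`, in the
topology of uniform convergence. Fixing the value at `p` removes the additive constant that keeps
the set of all calibrated functions from being compact. -/
def normalizedCalibrated {X : Type*} [TopologicalSpace X] (T : X → X) (f : X → ℝ) (b : ℝ) (p : X) :
    Set (X →ᵇ ℝ) :=
  {g | g p = 0 ∧ IsCalibratedWith T f b g}

lemma isCompact_normalizedCalibrated {X : Type*} [MetricSpace X] [CompactSpace X] {T : X → X}
    {f : X → ℝ} {b : ℝ} {K M θ : ℝ≥0} (hT : Continuous T) (hcontr : ContractsBackward M θ T)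
    (hθ : θ < 1) (hf : LipschitzWith K f) (p : X) :
    IsCompact (normalizedCalibrated T f b p) := by
  have hlip (g : X →ᵇ ℝ) (hg : g ∈ normalizedCalibrated T f b p) :
      LipschitzWith (K * M / (1 - θ)) g :=
    hg.2.lipschitzWith (CompactSpace.uniformContinuous_of_continuous g.continuous) hcontr hθ hf
  refine BoundedContinuousFunction.arzela_ascoli₂
    (Metric.closedBall 0 (↑(K * M / (1 - θ)) * Metric.diam (univ : Set X)))
    (isCompact_closedBall _ _) _ ?closed ?bounded ?equicontinuous
  case closed =>
    exact (isClosed_eq (continuous_eval_const p) continuous_const).inter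
      (isClosed_setOf_isCalibratedWith hT hf.continuous)
  case bounded =>
    intro g x hg
    rw [← hg.1]
    refine ((hlip g hg).dist_le_mul x p).trans ?_
    gcongr
    exact Metric.dist_le_diam_of_mem Metric.isBounded_of_compactSpace (mem_univ x) (mem_univ p)
  case equicontinuous =>
    exact (LipschitzWith.uniformEquicontinuous _ _ fun g : normalizedCalibrated T f b p =>
      hlip g g.2).equicontinuous

end NormalizedCalibrated

/-! ### The set `K(f, T)` -/

section Kset

open scoped BoundedContinuousFunction

variable {f g : Circle1 → ℝ} {T : Circle1 → Circle1} {b : ℝ} {K M θ : ℝ≥0}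

lemma beta_eq (h : IsCalibratedWith T f b g) (hT : Continuous T) (hf : Continuous f)
    (hg : Continuous g) : beta f T = b := by
  have hgreatest :
      IsGreatest ((fun μ : Measure Circle1 => ∫ x, f x ∂μ) '' {μ | InvProb T μ}) b := by
    constructor
    · obtain ⟨μ, hprob, hμ, hint⟩ := h.exists_integral_eq hT hf hg
      exact ⟨μ, ⟨hprob, hμ.map_eq⟩, hint⟩
    · rintro _ ⟨μ, ⟨_, hμ⟩, rfl⟩
      exact h.integral_le hf hg ⟨hT.measurable, hμ⟩
  exact hgreatest.csSup_eq

lemma isCalibrated_iff :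
    IsCalibrated f T g ↔ Continuous g ∧ IsCalibratedWith T f (beta f T) g :=
  ⟨fun h => ⟨h.1.1, h.1.2, h.2⟩, fun h => ⟨⟨h.1, h.2.le⟩, h.2.exists_eq⟩⟩

lemma Lambda_eq_invariantCore :
    Lambda f T g = invariantCore T (contactLocus T f (beta f T) g) :=
  rfl

lemma image_Kset (hT : Continuous T) (hf : Continuous f) : T '' Kset f T = Kset f T := by
  simp only [Kset, Lambda_eq_invariantCore, image_iUnion₂]
  exact iUnion₂_congr fun g hg => image_invariantCore hT (isClosed_contactLocus hT hf hg.2.1.1)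

lemma Gset_nonempty (hT : Continuous T) (hcontr : ContractsBackward M θ T) (hθ : θ < 1)
    (hf : LipschitzWith K f) : (Gset f T).Nonempty := by
  obtain ⟨b, g, hg, h⟩ := exists_isCalibratedWith hT hcontr hθ hf
  obtain rfl := beta_eq h hT hf.continuous hg.continuous
  exact ⟨g, ⟨_, hg⟩, isCalibrated_iff.2 ⟨hg.continuous, h⟩⟩

lemma Kset_nonempty (hT : Continuous T) (hcontr : ContractsBackward M θ T) (hθ : θ < 1)
    (hf : LipschitzWith K f) : (Kset f T).Nonempty := by
  obtain ⟨g, hg⟩ := Gset_nonempty hT hcontr hθ hf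
  obtain ⟨hgc, h⟩ := isCalibrated_iff.1 hg.2
  refine (?_ : (Lambda f T g).Nonempty).mono (subset_biUnion_of_mem hg)
  rw [Lambda_eq_invariantCore]
  exact h.invariantCore_contactLocus_nonempty hT hf.continuous hgc

lemma Kset_eq_biUnion_normalizedCalibrated (hcontr : ContractsBackward M θ T) (hθ : θ < 1)
    (hf : LipschitzWith K f) :
    Kset f T = ⋃ g ∈ normalizedCalibrated T f (beta f T) 0,
      invariantCore T (contactLocus T f (beta f T) g) := by
  refine Subset.antisymm (iUnion₂_subset fun g hg => ?_) (iUnion₂_subset fun g hg => ?_)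
  · obtain ⟨hgc, h⟩ := isCalibrated_iff.1 hg.2
    let g₀ : Circle1 →ᵇ ℝ := .mkOfCompact ⟨fun x => g x - g 0, hgc.sub continuous_const⟩
    have hg₀ : g₀ ∈ normalizedCalibrated T f (beta f T) 0 := ⟨sub_self _, h.sub_const (g 0)⟩
    rw [Lambda_eq_invariantCore, ← contactLocus_sub_const T f _ g (g 0)]
    exact subset_biUnion_of_mem (u := fun g : Circle1 →ᵇ ℝ =>
      invariantCore T (contactLocus T f (beta f T) g)) hg₀
  · have hglip := hg.2.lipschitzWith (CompactSpace.uniformContinuous_of_continuous g.continuous)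
      hcontr hθ hf
    have hgG : ⇑g ∈ Gset f T := ⟨⟨_, hglip⟩, isCalibrated_iff.2 ⟨g.continuous, hg.2⟩⟩
    exact subset_biUnion_of_mem (u := Lambda f T) hgG

theorem Kset_compact_invariant_general (hT : Continuous T) (hcontr : ContractsBackward M θ T)
    (hθ : θ < 1) (hf : LipschitzWith K f) :
    (Kset f T).Nonempty ∧ IsCompact (Kset f T) ∧ T '' Kset f T = Kset f T := by
  refine ⟨Kset_nonempty hT hcontr hθ hf, ?_, image_Kset hT hf.continuous⟩
  rw [Kset_eq_biUnion_normalizedCalibrated hcontr hθ hf]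
  exact isCompact_biUnion_invariantCore_contactLocus hT hf.continuous
    (isCompact_normalizedCalibrated hT hcontr hθ hf 0)

end Kset

/-! ### Expanding circle maps -/

section CircleMap

variable {F : ℝ → ℝ}

lemma cmap_coe (hF : Function.Periodic (fun x => (F x : Circle1)) 1) (x : ℝ) :
    cmap F x = F x :=
  calc cmap F x = hF.lift (rep x : Circle1) := (hF.lift_coe _).symm
    _ = hF.lift x := congrArg hF.lift AddCircle.coe_equivIco
    _ = F x := hF.lift_coe x

lemma iterate_cmap_coe (hF : Function.Periodic (fun x => (F x : Circle1)) 1) (n : ℕ) (x : ℝ) :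
    (cmap F)^[n] x = F^[n] x :=
  ((show Function.Semiconj ((↑) : ℝ → Circle1) F (cmap F) from
    fun x => (cmap_coe hF x).symm).iterate_right n x).symm

lemma continuous_cmap (hF : Function.Periodic (fun x => (F x : Circle1)) 1)
    (hcont : Continuous F) : Continuous (cmap F) :=
  (QuotientAddGroup.isQuotientMap_mk (AddSubgroup.zmultiples (1 : ℝ))).continuous_iff.2 <|
    ((AddCircle.continuous_mk' 1).comp hcont).congr fun x => (cmap_coe hF x).symm

lemma dist_coe_le (x y : ℝ) : dist (x : Circle1) y ≤ |x - y| := by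
  rw [dist_eq_norm, ← AddCircle.coe_sub]
  exact QuotientAddGroup.norm_mk_le_norm

lemma exists_coe_eq_and_dist_eq (x : ℝ) (z : Circle1) :
    ∃ w : ℝ, (w : Circle1) = z ∧ dist (x : Circle1) z = |x - w| := by
  obtain ⟨v, rfl⟩ := QuotientAddGroup.mk_surjective z
  refine ⟨v + round (x - v), by simp, ?_⟩
  rw [dist_eq_norm, ← sub_sub]
  exact UnitAddCircle.norm_eq

lemma contractsBackward_cmap {M θ : ℝ≥0} (hF : Function.Periodic (fun x => (F x : Circle1)) 1)
    (hsurj : Function.Surjective F)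
    (hexp : ∀ n x y, |x - y| ≤ M * θ ^ n * |F^[n] x - F^[n] y|) :
    ContractsBackward M θ (cmap F) := by
  intro n y x
  obtain ⟨a, rfl⟩ := QuotientAddGroup.mk_surjective y
  obtain ⟨w, rfl, hw⟩ := exists_coe_eq_and_dist_eq (F^[n] a) x
  obtain ⟨a', rfl⟩ := hsurj.iterate n w
  refine ⟨a', iterate_cmap_coe hF n a', fun i hi => ?_⟩
  have hsplit (c : ℝ) : F^[n - i] (F^[i] c) = F^[n] c := by
    rw [← Function.iterate_add_apply, Nat.sub_add_cancel hi]
  calc dist ((cmap F)^[i] a) ((cmap F)^[i] a')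
      = dist (F^[i] a : Circle1) (F^[i] a') := by simp only [iterate_cmap_coe hF]
    _ ≤ |F^[i] a - F^[i] a'| := dist_coe_le _ _
    _ ≤ M * θ ^ (n - i) * |F^[n] a - F^[n] a'| := by
        simpa only [hsplit] using hexp (n - i) (F^[i] a) (F^[i] a')
    _ = M * θ ^ (n - i) * dist ((cmap F)^[n] a) (F^[n] a') := by
        rw [iterate_cmap_coe hF, hw]

lemma mul_abs_sub_le_of_le_abs_deriv {G : ℝ → ℝ} (hG : Differentiable ℝ G) {c : ℝ}
    (hc : ∀ x, c ≤ |deriv G x|) (x y : ℝ) : c * |x - y| ≤ |G x - G y| := by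
  wlog hxy : y < x generalizing x y
  · rcases (not_lt.1 hxy).eq_or_lt with rfl | hlt
    · simp
    · simpa only [abs_sub_comm] using this y x hlt
  obtain ⟨z, -, hz⟩ := exists_deriv_eq_slope G hxy hG.continuous.continuousOn hG.differentiableOn
  have hcz := hc z
  rwa [hz, abs_div, le_div_iff₀ (abs_pos.2 (sub_ne_zero.2 hxy.ne'))] at hcz

lemma surjective_of_le_abs_deriv {G : ℝ → ℝ} (hG : ContDiff ℝ 1 G) {c : ℝ} (hc : 0 < c)
    (h : ∀ x, c ≤ |deriv G x|) : Function.Surjective G := by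
  have hanti : AntilipschitzWith (Real.toNNReal c⁻¹) G :=
    AntilipschitzWith.of_le_mul_dist fun x y => by
      rw [Real.coe_toNNReal _ (inv_nonneg.2 hc.le), inv_mul_eq_div, le_div_iff₀' hc]
      exact mul_abs_sub_le_of_le_abs_deriv (hG.differentiable one_ne_zero) h x y
  have hproper : IsProperMap G := isProperMap_iff_tendsto_cocompact.2
    ⟨hG.continuous, by simpa only [Metric.cobounded_eq_cocompact] using hanti.tendsto_cobounded⟩
  have hopen : IsOpenMap G := isOpenMap_of_hasStrictDerivAt (f' := deriv G)
    (fun x => hG.contDiffAt.hasStrictDerivAt one_ne_zero)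
    fun x => abs_pos.1 (hc.trans_le (h x))
  exact range_eq_univ.1 (IsClopen.eq_univ
    ⟨hproper.isClosedMap.isClosed_range, hopen.isOpen_range⟩ (range_nonempty G))

namespace ExpandingLift

lemma periodic_coe {r : ℕ∞} (hF : ExpandingLift r F) :
    Function.Periodic (fun x => (F x : Circle1)) 1 := by
  obtain ⟨-, ⟨d, hd⟩, -⟩ := hF
  exact fun x => by simp [hd]

lemma surjective (hF : ExpandingLift 1 F) : Function.Surjective F := by
  obtain ⟨hdiff, -, C, hC, l, hl, hexp⟩ := hF
  exact surjective_of_le_abs_deriv hdiff (c := C * l ^ 1) (by positivity) (hexp 1 le_rfl)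

lemma exists_abs_sub_le (hF : ExpandingLift 1 F) :
    ∃ M θ : ℝ≥0, θ < 1 ∧ ∀ n x y, |x - y| ≤ M * θ ^ n * |F^[n] x - F^[n] y| := by
  obtain ⟨hdiff, -, C, hC, l, hl, hexp⟩ := hF
  lift C to ℝ≥0 using hC.le
  lift l to ℝ≥0 using by positivity
  refine ⟨max C⁻¹ 1, l⁻¹, inv_lt_one_of_one_lt₀ (mod_cast hl), fun n x y => ?_⟩
  rcases n.eq_zero_or_pos with rfl | hn
  · simpa using le_mul_of_one_le_left (abs_nonneg (x - y)) (le_max_right (C⁻¹ : ℝ) 1)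
  have hstep : C * l ^ n * |x - y| ≤ |F^[n] x - F^[n] y| :=
    mul_abs_sub_le_of_le_abs_deriv ((hdiff.differentiable one_ne_zero).iterate n) (hexp n hn) x y
  have hpos : 0 < (C : ℝ) * l ^ n := by positivity
  calc |x - y| = (C * l ^ n : ℝ)⁻¹ * (C * l ^ n * |x - y|) :=
        (inv_mul_cancel_left₀ hpos.ne' _).symm
    _ ≤ (C * l ^ n : ℝ)⁻¹ * |F^[n] x - F^[n] y| := by gcongr
    _ ≤ ↑(max C⁻¹ 1) * ↑l⁻¹ ^ n * |F^[n] x - F^[n] y| := by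
        rw [mul_inv, ← inv_pow]
        push_cast
        gcongr
        exact le_max_left _ _

lemma exists_contractsBackward (hF : ExpandingLift 1 F) :
    ∃ M θ : ℝ≥0, θ < 1 ∧ ContractsBackward M θ (cmap F) := by
  obtain ⟨M, θ, hθ, hexp⟩ := hF.exists_abs_sub_le
  exact ⟨M, θ, hθ, contractsBackward_cmap hF.periodic_coe hF.surjective hexp⟩

end ExpandingLift

lemma CrFun.exists_lipschitzWith (f : CrFun 1) : ∃ K : ℝ≥0, LipschitzWith K f.1 := by
  have hf : ContDiff ℝ 1 fun x : ℝ => f.1 x := f.2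
  have hper : Function.Periodic (deriv fun x : ℝ => f.1 x) 1 := fun x => by
    rw [← deriv_comp_add_const]
    simp
  obtain ⟨K, hK⟩ :=
    (hper.isBounded_of_continuous one_ne_zero (hf.continuous_deriv le_rfl)).exists_norm_le
  have hlip : LipschitzWith K.toNNReal fun x : ℝ => f.1 x :=
    lipschitzWith_of_nnnorm_deriv_le (hf.differentiable one_ne_zero) fun x =>
      NNReal.coe_le_coe.1 ((hK _ (mem_range_self x)).trans (Real.le_coe_toNNReal K))
  refine ⟨K.toNNReal, LipschitzWith.of_dist_le_mul fun z z' => ?_⟩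
  obtain ⟨x, rfl⟩ := QuotientAddGroup.mk_surjective z
  obtain ⟨w, rfl, hw⟩ := exists_coe_eq_and_dist_eq x z'
  exact (hlip.dist_le_mul x w).trans_eq (congrArg _ hw.symm)

end CircleMap

/-- Proposition 2.1(ii): `K(f,T)` is a nonempty compact set with `T(K(f,T)) = K(f,T)`. -/
theorem Kset_compact_invariant (f : CrFun 1) (F : ExpMap 1) :
    (Kset f.1 (cmap F.1)).Nonempty ∧ IsCompact (Kset f.1 (cmap F.1)) ∧
      cmap F.1 '' Kset f.1 (cmap F.1) = Kset f.1 (cmap F.1) := by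
  obtain ⟨K, hf⟩ := f.exists_lipschitzWith
  obtain ⟨M, θ, hθ, hcontr⟩ := F.2.exists_contractsBackward
  exact Kset_compact_invariant_general
    (continuous_cmap F.2.periodic_coe F.2.1.continuous) hcontr hθ hf
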